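/- The set of positive integers n such that the square lattice ℤ[i] possesses a well-rounded sublattice of index n is exactly { 2·p·q·|z|² : p, q positive integers with q ≤ p ≤ √3·q, z ∈ ℤ[i] nonzero } ∪ { p·q·|z|² : p, q positive integers with q ≤ p ≤ √3·q, z ∈ ℤ[i] nonzero, and p·q·|z|² is odd }, where |z|² = a² + b² for z = a + bi. -/

import Mathlib

noncomputable section

/-- A subgroup `Λ` of `ℂ ≅ ℝ²` is well-rounded if it contains two `ℝ`-linearly
independent vectors, both of minimal norm among the nonzero elements of `Λ`. -/
def IsWellRounded (Λ : AddSubgroup ℂ) : Prop :=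
  ∃ x y : ℂ, x ∈ Λ ∧ y ∈ Λ ∧ LinearIndependent ℝ ![x, y] ∧
    (∀ z ∈ Λ, z ≠ 0 → ‖x‖ ≤ ‖z‖) ∧ (∀ z ∈ Λ, z ≠ 0 → ‖y‖ ≤ ‖z‖)

/-- The square lattice, realised as the Gaussian integers `ℤ[i] = ℤ + ℤi ⊂ ℂ`. -/
def squareLattice : AddSubgroup ℂ := AddSubgroup.closure {1, Complex.I}

open GaussianInt Module ComplexConjugate RealInnerProductSpace

/-!
A planar lattice is well-rounded iff it is spanned by a reduced pair `x`, `y`: vectors of equal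
length whose angle lies between `60°` and `120°`, i.e. whose perpendicular diagonals `x + y` and
`x - y` have ratio between `1 / √3` and `√3`. For Gaussian integers of equal norm, unique
factorisation gives `x = z * a` and, up to absorbing signs, `y = z * star a` or
`y = z * (i * star a)`. The diagonals are then proportional to `a.re`, `a.im` in the first case and
to `a.re + a.im`, `a.re - a.im` in the second, so the index is `2 * p * q * |z|²`, respectively
`p * q * |z|²`, for a pair `p`, `q` of bounded ratio. In the second case `p` and `q` have the same
parity, which is why only odd indices are new.
-/

/-- Two scalars are balanced if the ratio of their absolute values lies in `[1 / √3, √3]`.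
The squared form makes sense over `ℤ` and does not depend on order or signs. -/
def IsBalanced {R : Type*} [Semiring R] [LE R] (p q : R) : Prop :=
  p ^ 2 ≤ 3 * q ^ 2 ∧ q ^ 2 ≤ 3 * p ^ 2

theorem IsBalanced.symm {R : Type*} [Semiring R] [LE R] {p q : R} (h : IsBalanced p q) :
    IsBalanced q p :=
  And.symm h

theorem isBalanced_intCast_iff {R : Type*} [Ring R] [PartialOrder R] [IsOrderedRing R]
    [Nontrivial R] {p q : ℤ} : IsBalanced (p : R) (q : R) ↔ IsBalanced p q := by
  simp only [IsBalanced]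
  norm_cast

theorem isBalanced_abs_iff {R : Type*} [Ring R] [LinearOrder R] [IsOrderedRing R] {p q : R} :
    IsBalanced |p| |q| ↔ IsBalanced p q := by
  simp only [IsBalanced, sq_abs]

theorem isBalanced_mul_right_iff {R : Type*} [CommRing R] [LinearOrder R] [IsStrictOrderedRing R]
    {c p q : R} (hc : c ≠ 0) : IsBalanced (p * c) (q * c) ↔ IsBalanced p q := by
  have hc2 : 0 < c ^ 2 := by positivity
  simp only [IsBalanced, mul_pow, ← mul_assoc, mul_le_mul_iff_left₀ hc2]

theorem isBalanced_natCast_iff_of_le {p q : ℕ} (hqp : q ≤ p) :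
    IsBalanced (p : ℤ) q ↔ (p : ℝ) ≤ √3 * q := by
  have hsq : (q : ℤ) ^ 2 ≤ p ^ 2 := by gcongr
  have hq : (q : ℤ) ^ 2 ≤ 3 * p ^ 2 := by nlinarith
  rw [IsBalanced, and_iff_left hq, ← sq_le_sq₀ (a := (p : ℝ)) (by positivity) (by positivity),
    mul_pow, Real.sq_sqrt (by norm_num)]
  norm_cast

/-! ### Reduced pairs -/

section

variable {V : Type*} [NormedAddCommGroup V] [InnerProductSpace ℝ V] {x y : V}

/-- Two vectors form a reduced pair if they have equal length and the cosine of their angle lies in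
`[-1 / 2, 1 / 2]`. This is Lagrange-Gauss reduction for a basis of a well-rounded lattice;
the pair `0, 0` is allowed. -/
def IsReducedPair (x y : V) : Prop :=
  ‖x‖ = ‖y‖ ∧ |2 * ⟪x, y⟫| ≤ ‖x‖ ^ 2

theorem isReducedPair_iff_isBalanced :
    IsReducedPair x y ↔ ‖x‖ = ‖y‖ ∧ IsBalanced ‖x + y‖ ‖x - y‖ := by
  refine and_congr_right fun hxy => ?_
  rw [IsBalanced, norm_add_sq_real, norm_sub_sq_real, ← hxy, abs_le]
  constructor <;> rintro ⟨h₁, h₂⟩ <;> constructor <;> linarith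

theorem isReducedPair_of_forall_norm_le {Λ : AddSubgroup V} (hx : x ∈ Λ) (hy : y ∈ Λ)
    (hxy : LinearIndependent ℝ ![x, y]) (hminx : ∀ z ∈ Λ, z ≠ 0 → ‖x‖ ≤ ‖z‖)
    (hminy : ∀ z ∈ Λ, z ≠ 0 → ‖y‖ ≤ ‖z‖) : IsReducedPair x y := by
  rw [LinearIndependent.pair_iff] at hxy
  have hx₀ : x ≠ 0 := fun h => by simpa using hxy 1 0 (by simp [h])
  have hy₀ : y ≠ 0 := fun h => by simpa using hxy 0 1 (by simp [h])
  have hadd : x + y ≠ 0 := fun h => by simpa using hxy 1 1 (by simp [h])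
  have hsub : x - y ≠ 0 := fun h => by simpa using hxy 1 (-1) (by simpa [sub_eq_add_neg] using h)
  have hnorm : ‖x‖ = ‖y‖ := le_antisymm (hminx y hy hy₀) (hminy x hx hx₀)
  have hle_add := pow_le_pow_left₀ (norm_nonneg x) (hminx _ (Λ.add_mem hx hy) hadd) 2
  have hle_sub := pow_le_pow_left₀ (norm_nonneg x) (hminx _ (Λ.sub_mem hx hy) hsub) 2
  rw [norm_add_sq_real, ← hnorm] at hle_add
  rw [norm_sub_sq_real, ← hnorm] at hle_sub
  exact ⟨hnorm, abs_le.2 ⟨by linarith, by linarith⟩⟩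

namespace IsReducedPair

theorem abs_norm_smul_add_smul_sq_sub_le (h : IsReducedPair x y) (s t : ℝ) :
    |‖s • x + t • y‖ ^ 2 - (s ^ 2 + t ^ 2) * ‖x‖ ^ 2| ≤ |s * t| * ‖x‖ ^ 2 := by
  have hexpand : ‖s • x + t • y‖ ^ 2 - (s ^ 2 + t ^ 2) * ‖x‖ ^ 2 = s * t * (2 * ⟪x, y⟫) := by
    rw [norm_add_sq_real, norm_smul, norm_smul, ← h.1, real_inner_smul_left,
      real_inner_smul_right, mul_pow, mul_pow, Real.norm_eq_abs, Real.norm_eq_abs, sq_abs, sq_abs]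
    ring
  rw [hexpand, abs_mul]
  exact mul_le_mul_of_nonneg_left h.2 (abs_nonneg _)

theorem norm_le_norm_zsmul_add_zsmul (h : IsReducedPair x y) {k l : ℤ} (hkl : k ≠ 0 ∨ l ≠ 0) :
    ‖x‖ ≤ ‖k • x + l • y‖ := by
  have hform : 1 ≤ k ^ 2 + l ^ 2 - |k * l| := by
    have hpos : 0 < k ^ 2 + l ^ 2 := by rcases hkl with h | h <;> positivity
    cases abs_cases (k * l) <;> nlinarith [sq_nonneg (k - l), sq_nonneg (k + l)]
  have hform' : (1 : ℝ) ≤ k ^ 2 + l ^ 2 - |(k : ℝ) * l| := by exact_mod_cast hform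
  have hdist := (abs_le.1 (h.abs_norm_smul_add_smul_sq_sub_le k l)).1
  rw [← Int.cast_smul_eq_zsmul ℝ, ← Int.cast_smul_eq_zsmul ℝ]
  refine le_of_sq_le_sq ?_ (norm_nonneg _)
  nlinarith [sq_nonneg ‖x‖]

theorem norm_le_of_mem_closure (h : IsReducedPair x y) {z : V}
    (hz : z ∈ AddSubgroup.closure {x, y}) (hz₀ : z ≠ 0) : ‖x‖ ≤ ‖z‖ := by
  obtain ⟨k, l, rfl⟩ := AddSubgroup.mem_closure_pair.1 hz
  refine h.norm_le_norm_zsmul_add_zsmul ?_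
  contrapose! hz₀
  simp [hz₀]

theorem mem_closure_of_mem_span (h : IsReducedPair x y) {Λ : AddSubgroup V} (hx : x ∈ Λ)
    (hy : y ∈ Λ) (hmin : ∀ z ∈ Λ, z ≠ 0 → ‖x‖ ≤ ‖z‖) {z : V} (hz : z ∈ Λ)
    (hspan : z ∈ Submodule.span ℝ {x, y}) : z ∈ AddSubgroup.closure {x, y} := by
  obtain ⟨s, t, rfl⟩ := Submodule.mem_span_pair.1 hspan
  -- Rounding the coordinates leaves a remainder in `Λ` that is strictly shorter than `x`.
  set w := (s - round s) • x + (t - round t) • y with hw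
  have hw_eq : w = s • x + t • y - (round s • x + round t • y) := by
    rw [hw, sub_smul, sub_smul, Int.cast_smul_eq_zsmul, Int.cast_smul_eq_zsmul]
    abel
  have hwΛ : w ∈ Λ := hw_eq ▸ Λ.sub_mem hz (Λ.add_mem (Λ.zsmul_mem hx _) (Λ.zsmul_mem hy _))
  have hshort : ‖w‖ ^ 2 ≤ 3 / 4 * ‖x‖ ^ 2 := by
    have hs := abs_sub_round s
    have ht := abs_sub_round t
    have hdist := (abs_le.1 (h.abs_norm_smul_add_smul_sq_sub_le (s - round s) (t - round t))).2
    have hcoeff : (s - round s) ^ 2 + (t - round t) ^ 2 + |(s - round s) * (t - round t)| ≤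
        3 / 4 := by
      rw [abs_mul, ← sq_abs (s - _), ← sq_abs (t - _)]
      nlinarith [abs_nonneg (s - round s), abs_nonneg (t - round t)]
    nlinarith [sq_nonneg ‖x‖]
  have hw₀ : w = 0 := by
    by_contra hne
    have hle := pow_le_pow_left₀ (norm_nonneg x) (hmin w hwΛ hne) 2
    have hpos : 0 < ‖w‖ := norm_pos_iff.2 hne
    nlinarith
  exact AddSubgroup.mem_closure_pair.2 ⟨round s, round t, (sub_eq_zero.1 (hw_eq ▸ hw₀)).symm⟩

end IsReducedPair

end

theorem isWellRounded_iff_exists_isReducedPair {Λ : AddSubgroup ℂ} :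
    IsWellRounded Λ ↔ ∃ x y : ℂ, LinearIndependent ℝ ![x, y] ∧ IsReducedPair x y ∧
      Λ = AddSubgroup.closure {x, y} := by
  constructor
  · rintro ⟨x, y, hx, hy, hli, hminx, hminy⟩
    have hred := isReducedPair_of_forall_norm_le hx hy hli hminx hminy
    have hspan : Submodule.span ℝ {x, y} = ⊤ := by
      simpa [Set.pair_comm] using hli.span_eq_top_of_card_eq_finrank (by simp)
    refine ⟨x, y, hli, hred, le_antisymm (fun z hz => ?_) ?_⟩
    · exact hred.mem_closure_of_mem_span hx hy hminx hz (hspan ▸ Submodule.mem_top)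
    · exact (AddSubgroup.closure_le _).2 (Set.pair_subset hx hy)
  · rintro ⟨x, y, hli, hred, rfl⟩
    refine ⟨x, y, AddSubgroup.subset_closure (by simp), AddSubgroup.subset_closure (by simp), hli,
      fun z hz hz₀ => hred.norm_le_of_mem_closure hz hz₀, fun z hz hz₀ => ?_⟩
    exact hred.1 ▸ hred.norm_le_of_mem_closure hz hz₀

/-! ### Well-rounded sublattices of the square lattice -/

theorem index_closure_range_eq_natAbs_det {M ι : Type*} [AddCommGroup M] [Fintype ι]
    [DecidableEq ι] (b : Basis ι ℤ M) {v : ι → M} (hv : LinearIndependent ℤ v) :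
    (AddSubgroup.closure (Set.range v)).index = (b.det v).natAbs := by
  rw [← Submodule.span_int_eq_addSubgroupClosure,
    AddSubgroup.index_eq_natAbs_det b _ (Basis.span hv)]
  congr 2
  exact funext fun i => congrArg Subtype.val (Basis.span_apply hv i)

theorem linearIndependent_complex_pair_iff {x y : ℂ} :
    LinearIndependent ℝ ![x, y] ↔ (conj x * y).im ≠ 0 := by
  have hdet : Complex.basisOneI.det ![x, y] = (conj x * y).im := by
    simp only [Basis.det_apply, Matrix.det_fin_two, Basis.toMatrix_apply, Matrix.cons_val_zero,
      Matrix.cons_val_one, Complex.coe_basisOneI_repr, Complex.mul_im, Complex.conj_re,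
      Complex.conj_im]
    ring
  rw [← hdet, ← isUnit_iff_ne_zero, ← Complex.basisOneI.is_basis_iff_det]
  exact (and_iff_left_of_imp fun hli => hli.span_eq_top_of_card_eq_finrank (by simp)).symm

/-- The `ℤ`-basis `1, i` of the Gaussian integers, used to compute indices as determinants. -/
def gaussianIntBasis : Basis (Fin 2) ℤ GaussianInt :=
  .ofEquivFun
    { toFun z := ![z.re, z.im]
      invFun v := ⟨v 0, v 1⟩
      map_add' x y := by ext k; fin_cases k <;> simp
      map_smul' c x := by ext k; fin_cases k <;> simp
      left_inv x := rfl
      right_inv v := by ext k; fin_cases k <;> simp }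

theorem gaussianIntBasis_repr (x : GaussianInt) : ⇑(gaussianIntBasis.repr x) = ![x.re, x.im] :=
  rfl

theorem gaussianIntBasis_det (x y : GaussianInt) :
    gaussianIntBasis.det ![x, y] = (star x * y).im := by
  simp only [Basis.det_apply, Matrix.det_fin_two, Basis.toMatrix_apply, gaussianIntBasis_repr,
    Matrix.cons_val_zero, Matrix.cons_val_one, Zsqrtd.im_mul, Zsqrtd.re_star, Zsqrtd.im_star]
  ring

theorem im_conj_toComplex_mul (x y : GaussianInt) :
    (conj (x : ℂ) * y).im = (star x * y).im := by
  rw [← toComplex_star, ← toComplex_mul, intCast_im]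

theorem index_closure_gaussianInt_pair {x y : GaussianInt} (hxy : (star x * y).im ≠ 0) :
    (AddSubgroup.closure {x, y}).index = (star x * y).im.natAbs := by
  have hli : LinearIndependent ℝ ![(x : ℂ), (y : ℂ)] := by
    rw [linearIndependent_complex_pair_iff, im_conj_toComplex_mul]
    exact_mod_cast hxy
  have hliℤ : LinearIndependent ℤ ![x, y] := by
    refine .of_comp toComplex.toAddMonoidHom.toIntLinearMap ?_
    convert! hli.restrict_scalars' ℤ
    ext k; fin_cases k <;> rfl
  rw [← gaussianIntBasis_det, ← index_closure_range_eq_natAbs_det _ hliℤ,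
    Matrix.range_cons_cons_empty]

theorem squareLattice_eq_map_top :
    squareLattice = (⊤ : AddSubgroup GaussianInt).map toComplex.toAddMonoidHom := by
  ext z
  rw [squareLattice, AddSubgroup.mem_closure_pair]
  constructor
  · rintro ⟨a, b, rfl⟩
    exact ⟨⟨a, b⟩, trivial, by simp [toComplex_def']⟩
  · rintro ⟨w, -, rfl⟩
    exact ⟨w.re, w.im, by simp [toComplex_def]⟩

theorem index_addSubgroupOf_closure_pair {x y : GaussianInt} (hxy : (star x * y).im ≠ 0) :
    ((AddSubgroup.closure {(x : ℂ), (y : ℂ)}).addSubgroupOf squareLattice).index =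
      (star x * y).im.natAbs := by
  have hmap : AddSubgroup.closure {(x : ℂ), (y : ℂ)} =
      (AddSubgroup.closure {x, y}).map toComplex.toAddMonoidHom := by
    rw [AddMonoidHom.map_closure, Set.image_pair]
    rfl
  rw [← AddSubgroup.relIndex, squareLattice_eq_map_top, hmap,
    AddSubgroup.relIndex_map_map_of_injective _ _ toComplex_injective,
    AddSubgroup.relIndex_top_right, index_closure_gaussianInt_pair hxy]

theorem exists_isWellRounded_index_iff {n : ℕ} (hn : n ≠ 0) :
    (∃ Λ : AddSubgroup ℂ, Λ ≤ squareLattice ∧ IsWellRounded Λ ∧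
        (Λ.addSubgroupOf squareLattice).index = n) ↔
      ∃ x y : GaussianInt, IsReducedPair (x : ℂ) y ∧ (star x * y).im.natAbs = n := by
  constructor
  · rintro ⟨Λ, hle, hΛ, hindex⟩
    obtain ⟨x, y, hli, hred, rfl⟩ := isWellRounded_iff_exists_isReducedPair.1 hΛ
    rw [AddSubgroup.closure_le, Set.pair_subset_iff, squareLattice_eq_map_top] at hle
    obtain ⟨⟨x, -, rfl⟩, ⟨y, -, rfl⟩⟩ := hle
    have hdet : (star x * y).im ≠ 0 := by
      rw [linearIndependent_complex_pair_iff] at hli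
      exact_mod_cast im_conj_toComplex_mul x y ▸ hli
    exact ⟨x, y, hred, (index_addSubgroupOf_closure_pair hdet).symm.trans hindex⟩
  · rintro ⟨x, y, hred, rfl⟩
    rw [Int.natAbs_ne_zero] at hn
    have hli : LinearIndependent ℝ ![(x : ℂ), (y : ℂ)] := by
      rw [linearIndependent_complex_pair_iff, im_conj_toComplex_mul]
      exact_mod_cast hn
    refine ⟨_, ?_, isWellRounded_iff_exists_isReducedPair.2 ⟨x, y, hli, hred, rfl⟩,
      index_addSubgroupOf_closure_pair hn⟩
    rw [AddSubgroup.closure_le, Set.pair_subset_iff, squareLattice_eq_map_top]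
    exact ⟨⟨x, trivial, rfl⟩, ⟨y, trivial, rfl⟩⟩

/-! ### Gaussian integers of equal norm -/

theorem exists_eq_mul_and_eq_mul_star_of_mul_star_eq {R : Type*} [CommRing R] [IsDomain R]
    [GCDMonoid R] [StarRing R] {x y : R} (h : x * star x = y * star y) :
    ∃ (z a : R) (u : Rˣ), x = z * a ∧ y = z * (u * star a) := by
  obtain ⟨a, b, hxa, hyb, hab⟩ := extract_gcd x y
  rw [gcd_isUnit_iff_isRelPrime] at hab
  generalize gcd x y = z at hxa hyb
  subst hxa hyb
  obtain rfl | hz := eq_or_ne z 0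
  · exact ⟨0, 0, 1, by simp⟩
  have hnorm : a * star a = b * star b := by
    refine mul_left_cancel₀ (mul_ne_zero hz (star_ne_zero.2 hz)) ?_
    simp only [star_mul'] at h
    linear_combination h
  have hstar : IsRelPrime (star b) (star a) := .of_map starRingAut (by simpa using hab.symm)
  have hdvd : star a ∣ b := hstar.symm.dvd_of_dvd_mul_right ⟨a, by rw [← hnorm, mul_comm]⟩
  have hdvd' : b ∣ star a := hab.symm.dvd_of_dvd_mul_left ⟨star b, hnorm⟩
  obtain ⟨u, rfl⟩ := associated_of_dvd_dvd hdvd hdvd'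
  exact ⟨z, a, u, rfl, by rw [mul_comm (u : R)]⟩

theorem gaussianInt_norm_eq (z : GaussianInt) : z.norm = z.re ^ 2 + z.im ^ 2 := by
  rw [Zsqrtd.norm_def]
  ring

theorem gaussianInt_eq_of_isUnit {u : GaussianInt} (hu : IsUnit u) :
    u = 1 ∨ u = -1 ∨ u = Zsqrtd.sqrtd ∨ u = -Zsqrtd.sqrtd := by
  have hnorm := (Zsqrtd.norm_eq_one_iff' (by norm_num) u).2 hu
  rw [gaussianInt_norm_eq] at hnorm
  have hre : |u.re| ≤ 1 := (sq_le_one_iff_abs_le_one _).1 (by nlinarith [sq_nonneg u.im])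
  have him : |u.im| ≤ 1 := (sq_le_one_iff_abs_le_one _).1 (by nlinarith [sq_nonneg u.re])
  rcases Int.abs_le_one_iff.1 hre with hr | hr | hr <;>
    rcases Int.abs_le_one_iff.1 him with hi | hi | hi <;>
    simp_all [Zsqrtd.ext_iff]

theorem exists_eq_mul_star_of_norm_eq {x y : GaussianInt} (h : x.norm = y.norm) :
    ∃ z a : GaussianInt, x = z * a ∧
      (y = z * star a ∨ y = z * (Zsqrtd.sqrtd * star a)) := by
  let _ : GCDMonoid GaussianInt := EuclideanDomain.gcdMonoid GaussianInt
  have hmul : x * star x = y * star y := by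
    rw [← Zsqrtd.norm_eq_mul_conj, ← Zsqrtd.norm_eq_mul_conj, h]
  obtain ⟨z, a, u, rfl, rfl⟩ := exists_eq_mul_and_eq_mul_star_of_mul_star_eq hmul
  have hI : (Zsqrtd.sqrtd * Zsqrtd.sqrtd : GaussianInt) = -1 := by ext <;> simp
  have hI' : star (Zsqrtd.sqrtd : GaussianInt) = -Zsqrtd.sqrtd := by ext <;> simp
  -- Replacing `z`, `a` by `-i * z`, `i * a` preserves `z * a` and negates `z * star a`.
  rcases gaussianInt_eq_of_isUnit u.isUnit with hu | hu | hu | hu <;> rw [hu]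
  · exact ⟨z, a, rfl, .inl (by ring)⟩
  · refine ⟨-Zsqrtd.sqrtd * z, Zsqrtd.sqrtd * a, by linear_combination (z * a) * hI, .inl ?_⟩
    rw [star_mul', hI']
    linear_combination (-z * star a) * hI
  · exact ⟨z, a, rfl, .inr rfl⟩
  · refine ⟨-Zsqrtd.sqrtd * z, Zsqrtd.sqrtd * a, by linear_combination (z * a) * hI, .inr ?_⟩
    rw [star_mul', hI']
    linear_combination (-z * Zsqrtd.sqrtd * star a) * hI

theorem isReducedPair_mul_left_iff {z x y : ℂ} (hz : z ≠ 0) :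
    IsReducedPair (z * x) (z * y) ↔ IsReducedPair x y := by
  have hz' : ‖z‖ ≠ 0 := norm_ne_zero_iff.2 hz
  rw [isReducedPair_iff_isBalanced, isReducedPair_iff_isBalanced, ← mul_add, ← mul_sub, norm_mul,
    norm_mul, norm_mul, norm_mul, mul_right_inj' hz', mul_comm, mul_comm _ ‖x - y‖,
    isBalanced_mul_right_iff hz']

theorem isReducedPair_conj_iff {a : ℂ} : IsReducedPair a (conj a) ↔ IsBalanced a.re a.im := by
  rw [isReducedPair_iff_isBalanced, and_iff_right (Complex.norm_conj a).symm, Complex.add_conj,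
    Complex.sub_conj, norm_mul, Complex.norm_I, mul_one, Complex.norm_real, Complex.norm_real,
    Real.norm_eq_abs, Real.norm_eq_abs, isBalanced_abs_iff, mul_comm, mul_comm _ a.im,
    isBalanced_mul_right_iff two_ne_zero]

theorem isReducedPair_I_mul_conj_iff {a : ℂ} :
    IsReducedPair a (Complex.I * conj a) ↔ IsBalanced (a.re + a.im) (a.re - a.im) := by
  have hadd : a + Complex.I * conj a = (a.re + a.im : ℝ) * (1 + Complex.I) := by
    apply Complex.ext <;> simp [add_comm]
  have hsub : a - Complex.I * conj a = (a.re - a.im : ℝ) * conj (1 + Complex.I) := by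
    apply Complex.ext <;> simp
  have hI : ‖(1 + Complex.I : ℂ)‖ ≠ 0 :=
    norm_ne_zero_iff.2 fun h => by simpa using congrArg Complex.re h
  rw [isReducedPair_iff_isBalanced, and_iff_right (by simp), hadd, hsub, norm_mul, norm_mul,
    Complex.norm_conj, isBalanced_mul_right_iff hI, Complex.norm_real, Complex.norm_real,
    Real.norm_eq_abs, Real.norm_eq_abs, isBalanced_abs_iff]

theorem im_star_mul_mul_mul_star (z a : GaussianInt) :
    (star (z * a) * (z * star a)).im = -2 * (a.re * a.im * z.norm) := by
  simp only [Zsqrtd.norm_def, Zsqrtd.re_mul, Zsqrtd.im_mul, Zsqrtd.re_star, Zsqrtd.im_star]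
  ring

theorem im_star_mul_mul_mul_sqrtd_mul_star (z a : GaussianInt) :
    (star (z * a) * (z * (Zsqrtd.sqrtd * star a))).im =
      (a.re + a.im) * (a.re - a.im) * z.norm := by
  simp only [Zsqrtd.norm_def, Zsqrtd.re_mul, Zsqrtd.im_mul, Zsqrtd.re_star, Zsqrtd.im_star,
    Zsqrtd.re_sqrtd, Zsqrtd.im_sqrtd]
  ring

theorem isReducedPair_mul_star_iff {z : GaussianInt} (hz : z ≠ 0) (a : GaussianInt) :
    IsReducedPair ((z * a : GaussianInt) : ℂ) (z * star a : GaussianInt) ↔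
      IsBalanced a.re a.im := by
  rw [toComplex_mul, toComplex_mul, isReducedPair_mul_left_iff (toComplex_eq_zero.not.2 hz),
    toComplex_star, isReducedPair_conj_iff, ← intCast_re, ← intCast_im, isBalanced_intCast_iff]

theorem toComplex_sqrtd : ((Zsqrtd.sqrtd : GaussianInt) : ℂ) = Complex.I := by
  simp [toComplex_def]

theorem isReducedPair_mul_sqrtd_mul_star_iff {z : GaussianInt} (hz : z ≠ 0) (a : GaussianInt) :
    IsReducedPair ((z * a : GaussianInt) : ℂ) (z * (Zsqrtd.sqrtd * star a) : GaussianInt) ↔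
      IsBalanced (a.re + a.im) (a.re - a.im) := by
  rw [toComplex_mul, toComplex_mul, isReducedPair_mul_left_iff (toComplex_eq_zero.not.2 hz),
    toComplex_mul, toComplex_sqrtd, toComplex_star, isReducedPair_I_mul_conj_iff, ← intCast_re,
    ← intCast_im, ← Int.cast_add, ← Int.cast_sub, isBalanced_intCast_iff]

/-! ### Balanced products -/

/-- `m` is the absolute value of a product `p * q * |z|²` with `p`, `q` balanced and `z` a Gaussian
integer; unlike in the theorem, `m = 0`, `p ≤ q` and negative `p`, `q` are allowed. -/
def IsBalancedProduct (m : ℕ) : Prop :=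
  ∃ (p q : ℤ) (z : GaussianInt), IsBalanced p q ∧ (p * q * z.norm).natAbs = m

theorem exists_gaussianInt_norm_eq_two_mul_of_even {z : GaussianInt} (hz : Even z.norm) :
    ∃ w : GaussianInt, z.norm = 2 * w.norm := by
  have hsum : Even (z.re + z.im) := by
    simpa [gaussianInt_norm_eq, parity_simps] using hz
  obtain ⟨c, hc⟩ := hsum
  refine ⟨⟨c, c - z.re⟩, ?_⟩
  rw [gaussianInt_norm_eq, gaussianInt_norm_eq, show z.im = c + c - z.re by linarith]
  ring

theorem exists_gaussianInt_norm_eq_two_mul (z : GaussianInt) :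
    ∃ w : GaussianInt, w.norm = 2 * z.norm :=
  ⟨⟨1, 1⟩ * z, by rw [Zsqrtd.norm_mul]; rfl⟩

theorem exists_isBalancedProduct_two_mul_of_even {p q : ℤ} {z : GaussianInt}
    (h : IsBalanced p q) (hparity : Even p ↔ Even q) (heven : Even (p * q * z.norm)) :
    ∃ m, IsBalancedProduct m ∧ (p * q * z.norm).natAbs = 2 * m := by
  by_cases hz : Even z.norm
  · obtain ⟨w, hw⟩ := exists_gaussianInt_norm_eq_two_mul_of_even hz
    refine ⟨_, ⟨p, q, w, h, rfl⟩, ?_⟩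
    rw [hw, mul_left_comm, Int.natAbs_mul]
    rfl
  · have hp : Even p := by simpa [hz, hparity, parity_simps] using heven
    -- Halving both `p` and `q` loses a factor `4`, of which doubling the norm restores a half.
    obtain ⟨w, hw⟩ := exists_gaussianInt_norm_eq_two_mul z
    obtain ⟨d, rfl⟩ := hparity.1 hp
    obtain ⟨c, rfl⟩ := hp
    rw [← mul_two, ← mul_two, isBalanced_mul_right_iff two_ne_zero] at h
    refine ⟨_, ⟨c, d, w, h, rfl⟩, ?_⟩
    rw [← Int.natAbs_natCast 2, ← Int.natAbs_mul, hw]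
    push_cast
    ring_nf

theorem isBalancedProduct_of_isReducedPair {x y : GaussianInt} (hxy : (star x * y).im ≠ 0)
    (hred : IsReducedPair (x : ℂ) y) :
    (∃ m, IsBalancedProduct m ∧ (star x * y).im.natAbs = 2 * m) ∨
      (Odd (star x * y).im.natAbs ∧ IsBalancedProduct (star x * y).im.natAbs) := by
  have hnorm : x.norm = y.norm := by
    have hsq : ‖(x : ℂ)‖ ^ 2 = ‖(y : ℂ)‖ ^ 2 := by rw [hred.1]
    rw [← Complex.normSq_eq_norm_sq, ← Complex.normSq_eq_norm_sq, ← intCast_real_norm,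
      ← intCast_real_norm] at hsq
    exact_mod_cast hsq
  obtain ⟨z, a, rfl, rfl | rfl⟩ := exists_eq_mul_star_of_norm_eq hnorm
  all_goals have hz : z ≠ 0 := by rintro rfl; simp at hxy
  · left
    rw [im_star_mul_mul_mul_star, Int.natAbs_mul]
    exact ⟨_, ⟨_, _, z, (isReducedPair_mul_star_iff hz a).1 hred, rfl⟩, rfl⟩
  · rw [im_star_mul_mul_mul_sqrtd_mul_star, Int.natAbs_odd, ← Int.not_even_iff_odd]
    have hbal := (isReducedPair_mul_sqrtd_mul_star_iff hz a).1 hred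
    have hparity : Even (a.re + a.im) ↔ Even (a.re - a.im) := by rw [Int.even_add, Int.even_sub]
    by_cases heven : Even ((a.re + a.im) * (a.re - a.im) * z.norm)
    · exact .inl (exists_isBalancedProduct_two_mul_of_even hbal hparity heven)
    · exact .inr ⟨heven, _, _, z, hbal, rfl⟩

theorem exists_isReducedPair_two_mul {m : ℕ} (hm : m ≠ 0) (h : IsBalancedProduct m) :
    ∃ x y : GaussianInt, IsReducedPair (x : ℂ) y ∧ (star x * y).im.natAbs = 2 * m := by
  obtain ⟨p, q, z, hbal, rfl⟩ := h
  have hz : z ≠ 0 := by rintro rfl; simp at hm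
  obtain ⟨a, rfl, rfl⟩ : ∃ a : GaussianInt, a.re = p ∧ a.im = q := ⟨⟨p, q⟩, rfl, rfl⟩
  refine ⟨z * a, z * star a, (isReducedPair_mul_star_iff hz a).2 hbal, ?_⟩
  rw [im_star_mul_mul_mul_star, Int.natAbs_mul]
  norm_num

theorem exists_isReducedPair_of_odd {n : ℕ} (hn : Odd n) (h : IsBalancedProduct n) :
    ∃ x y : GaussianInt, IsReducedPair (x : ℂ) y ∧ (star x * y).im.natAbs = n := by
  obtain ⟨p, q, z, hbal, rfl⟩ := h
  have hz : z ≠ 0 := by rintro rfl; simp at hn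
  rw [Int.natAbs_odd, Int.odd_mul, Int.odd_mul] at hn
  obtain ⟨⟨⟨c, rfl⟩, ⟨d, rfl⟩⟩, -⟩ := hn
  obtain ⟨a, hsum, hdiff⟩ :
      ∃ a : GaussianInt, a.re + a.im = 2 * c + 1 ∧ a.re - a.im = 2 * d + 1 :=
    ⟨⟨c + d + 1, c - d⟩, by ring, by ring⟩
  refine ⟨z * a, z * (Zsqrtd.sqrtd * star a), ?_, ?_⟩
  · rwa [isReducedPair_mul_sqrtd_mul_star_iff hz, hsum, hdiff]
  · rw [im_star_mul_mul_mul_sqrtd_mul_star, hsum, hdiff]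

theorem exists_iff_isBalancedProduct {m : ℕ} :
    (∃ p q : ℕ, 0 < p ∧ 0 < q ∧ q ≤ p ∧ (p : ℝ) ≤ √3 * q ∧
          ∃ a b : ℤ, ¬(a = 0 ∧ b = 0) ∧ (m : ℤ) = p * q * (a ^ 2 + b ^ 2)) ↔
      m ≠ 0 ∧ IsBalancedProduct m := by
  constructor
  · rintro ⟨p, q, hp, hq, hqp, hpq, a, b, hab, hm⟩
    refine ⟨?_, p, q, ⟨a, b⟩, (isBalanced_natCast_iff_of_le hqp).2 hpq, ?_⟩
    · have hnorm : 0 < a ^ 2 + b ^ 2 := by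
        rcases not_and_or.1 hab with h | h <;> positivity
      have hm₀ : 0 < (m : ℤ) := by rw [hm]; positivity
      lia
    · rw [gaussianInt_norm_eq, ← hm, Int.natAbs_natCast]
  · rintro ⟨hm, p, q, z, hbal, rfl⟩
    wlog hqp : q.natAbs ≤ p.natAbs generalizing p q
    · rw [mul_comm p q] at hm ⊢
      exact this q p hbal.symm hm (le_of_not_ge hqp)
    rw [Int.natAbs_ne_zero, mul_ne_zero_iff, mul_ne_zero_iff] at hm
    obtain ⟨⟨hp, hq⟩, hz⟩ := hm
    refine ⟨p.natAbs, q.natAbs, Int.natAbs_pos.2 hp, Int.natAbs_pos.2 hq, hqp,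
      (isBalanced_natCast_iff_of_le hqp).1 ?_, z.re, z.im, ?_, ?_⟩
    · rwa [Int.natCast_natAbs, Int.natCast_natAbs, isBalanced_abs_iff]
    · rintro ⟨hre, him⟩
      simp [gaussianInt_norm_eq, hre, him] at hz
    · rw [← gaussianInt_norm_eq, Int.natCast_natAbs, abs_mul, abs_mul,
        abs_of_nonneg (norm_nonneg z), Int.natCast_natAbs, Int.natCast_natAbs]

theorem exists_two_mul_iff_isBalancedProduct {n : ℕ} :
    (∃ p q : ℕ, 0 < p ∧ 0 < q ∧ q ≤ p ∧ (p : ℝ) ≤ √3 * q ∧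
          ∃ a b : ℤ, ¬(a = 0 ∧ b = 0) ∧ (n : ℤ) = 2 * p * q * (a ^ 2 + b ^ 2)) ↔
      ∃ m, (m ≠ 0 ∧ IsBalancedProduct m) ∧ n = 2 * m := by
  simp only [← exists_iff_isBalancedProduct]
  constructor
  · rintro ⟨p, q, hp, hq, hqp, hpq, a, b, hab, hn⟩
    refine ⟨p * q * (a ^ 2 + b ^ 2).natAbs, ⟨p, q, hp, hq, hqp, hpq, a, b, hab, ?_⟩, ?_⟩
    all_goals zify; rw [abs_of_nonneg (by positivity)]
    rw [hn]
    ring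
  · rintro ⟨m, ⟨p, q, hp, hq, hqp, hpq, a, b, hab, hm⟩, rfl⟩
    refine ⟨p, q, hp, hq, hqp, hpq, a, b, hab, ?_⟩
    push_cast
    rw [hm]
    ring

theorem wellRounded_square_index_set :
    {n : ℕ | 0 < n ∧ ∃ Λ : AddSubgroup ℂ, Λ ≤ squareLattice ∧ IsWellRounded Λ ∧
        (Λ.addSubgroupOf squareLattice).index = n} =
      {n : ℕ | ∃ p q : ℕ, 0 < p ∧ 0 < q ∧ q ≤ p ∧ (p : ℝ) ≤ Real.sqrt 3 * q ∧
          ∃ a b : ℤ, ¬(a = 0 ∧ b = 0) ∧ (n : ℤ) = 2 * p * q * (a ^ 2 + b ^ 2)} ∪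
      {n : ℕ | Odd n ∧ ∃ p q : ℕ, 0 < p ∧ 0 < q ∧ q ≤ p ∧ (p : ℝ) ≤ Real.sqrt 3 * q ∧
          ∃ a b : ℤ, ¬(a = 0 ∧ b = 0) ∧ (n : ℤ) = p * q * (a ^ 2 + b ^ 2)} := by
  ext n
  rw [Set.mem_union, Set.mem_ofPred_eq, Set.mem_ofPred_eq, Set.mem_ofPred_eq,
    exists_iff_isBalancedProduct, exists_two_mul_iff_isBalancedProduct]
  constructor
  · rintro ⟨hn, hΛ⟩
    obtain ⟨x, y, hred, rfl⟩ := (exists_isWellRounded_index_iff hn.ne').1 hΛ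
    rcases isBalancedProduct_of_isReducedPair (Int.natAbs_pos.1 hn) hred with
      ⟨m, hm, hindex⟩ | ⟨hodd, hm⟩
    · exact .inl ⟨m, ⟨by lia, hm⟩, hindex⟩
    · exact .inr ⟨hodd, hn.ne', hm⟩
  · rintro (⟨m, ⟨hm₀, hm⟩, rfl⟩ | ⟨hodd, hn, hm⟩)
    · have hn : 2 * m ≠ 0 := by lia
      exact ⟨hn.pos, (exists_isWellRounded_index_iff hn).2 (exists_isReducedPair_two_mul hm₀ hm)⟩
    · exact ⟨hn.pos, (exists_isWellRounded_index_iff hn).2 (exists_isReducedPair_of_odd hodd hm)⟩
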